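/- For every pair of integers (r,t) with either (r = 3 and t = 4) or (r ≥ 4 and 2 ≤ t ≤ r+1), and for all sufficiently large e, there exists a set M of t distinct monomials of degree e in r variables such that every one of the r variables divides at least one element of M, and the function h(i) = the number of monomials of degree i dividing at least one element of M is not log-concave. (There exist infinite families of non-log-concave pure O-sequences of codimension r and type t for these pairs.) -/

import Mathlib

open Finset

/-- The monomials of degree `i` dividing the monomial `a`. -/
def divisorsOfDegree {r : ℕ} (a : Fin r → ℕ) (i : ℕ) : Finset (Fin r → ℕ) :=
  (Iic a).filter fun b => ∑ j, b j = i

lemma mem_divisorsOfDegree {r : ℕ} {a b : Fin r → ℕ} {i : ℕ} :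
    b ∈ divisorsOfDegree a i ↔ b ≤ a ∧ ∑ j, b j = i := by
  simp [divisorsOfDegree]

/-- When distinct generators have no common divisor of degree `i`, the pure `O`-sequence in
degree `i` is the sum of the contributions of the generators. -/
lemma ncard_eq_sum_card_divisorsOfDegree {r : ℕ} (M : Finset (Fin r → ℕ)) (i : ℕ)
    (hM : (M : Set (Fin r → ℕ)).PairwiseDisjoint fun a => divisorsOfDegree a i) :
    {b : Fin r → ℕ | (∑ j, b j = i) ∧ ∃ a ∈ M, ∀ j, b j ≤ a j}.ncard =
      ∑ a ∈ M, (divisorsOfDegree a i).card := by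
  rw [← card_biUnion hM, ← Set.ncard_coe_finset]
  congr 1
  ext b
  simp only [Set.mem_ofPred_eq, coe_biUnion, Set.mem_iUnion, mem_coe, mem_divisorsOfDegree,
    Pi.le_def, exists_prop]
  tauto

/-- The monomial with exponent `c` at `k` and exponent `A` at every other variable. -/
def spike {r : ℕ} (k : Fin r) (c A : ℕ) : Fin r → ℕ :=
  Function.update (fun _ => A) k c

lemma sum_update_add {r : ℕ} (b : Fin r → ℕ) (k : Fin r) (c : ℕ) :
    ∑ j, Function.update b k c j + b k = ∑ j, b j + c := by
  rw [sum_update_of_mem (mem_univ k), ← add_sum_erase univ b (mem_univ k), sdiff_singleton_eq_erase]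
  ring

lemma sum_spike {m : ℕ} (k : Fin (m + 1)) (c A : ℕ) : ∑ j, spike k c A j = c + m * A := by
  have h := sum_update_add (fun _ : Fin (m + 1) => A) k c
  simp only [sum_const, card_univ, Fintype.card_fin, smul_eq_mul] at h
  rw [spike]
  linarith

lemma card_divisorsOfDegree_spike {m : ℕ} (k : Fin (m + 1)) (c A i : ℕ)
    (hc : i ≤ c) (hA : m * A ≤ i) :
    (divisorsOfDegree (spike k c A) i).card = (A + 1) ^ m := by
  have hcard : (Iic (spike k 0 A)).card = (A + 1) ^ m := by
    rw [Pi.card_Iic, ← mul_prod_erase univ _ (mem_univ k),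
      prod_congr rfl (g := fun _ => A + 1)]
    · simp [spike]
    · intro j hj
      simp [spike, ne_of_mem_erase hj]
  rw [← hcard]
  refine card_nbij' (fun b => Function.update b k 0)
    (fun b => Function.update b k (i - ∑ j, b j)) ?_ ?_ ?_ ?_
  · intro b hb
    have hb := (mem_divisorsOfDegree.1 hb).1
    simp only [coe_Iic, Set.mem_Iic, spike, update_le_update_iff] at hb ⊢
    refine ⟨le_rfl, fun j hj => ?_⟩
    simpa [spike, hj] using hb j
  · intro b hb
    simp only [coe_Iic, Set.mem_Iic] at hb
    have hk : b k = 0 := by simpa [spike] using hb k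
    have hs : ∑ j, b j ≤ 0 + m * A := by
      rw [← sum_spike k 0 A]
      exact sum_le_sum fun j _ => hb j
    have hu := sum_update_add b k (i - ∑ j, b j)
    refine mem_divisorsOfDegree.2 ⟨?_, by dsimp only; omega⟩
    rw [spike, update_le_update_iff]
    refine ⟨by omega, fun j hj => ?_⟩
    simpa [spike, hj] using hb j
  · intro b hb
    have hb := (mem_divisorsOfDegree.1 hb).2
    have hu := sum_update_add b k 0
    have hk : i - ∑ j, Function.update b k 0 j = b k := by omega
    simp [hk]
  · intro b hb
    simp only [coe_Iic, Set.mem_Iic] at hb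
    have hk : b k = 0 := by simpa [spike] using hb k
    simp [← hk]

/-- The monomial with exponents `p`, `q`, `s` at the first three variables, and `0` elsewhere. -/
def tripod (n p q s : ℕ) : Fin (n + 3) → ℕ :=
  Fin.cons p (Fin.cons q (Fin.cons s 0))

lemma sum_fin_add_three {n : ℕ} (b : Fin (n + 3) → ℕ) :
    ∑ j, b j = b 0 + b 1 + b 2 + ∑ j : Fin n, b j.succ.succ.succ := by
  simp only [Fin.sum_univ_succ, Fin.succ_zero_eq_one, Fin.succ_one_eq_two]
  ring

lemma sum_tripod (n p q s : ℕ) : ∑ j, tripod n p q s j = p + q + s := by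
  simp [tripod, Fin.sum_univ_succ, add_assoc]

lemma le_tripod_iff {n p q s : ℕ} {b : Fin (n + 3) → ℕ} :
    b ≤ tripod n p q s ↔ b 0 ≤ p ∧ b 1 ≤ q ∧ b 2 ≤ s ∧ ∀ j : Fin n, b j.succ.succ.succ = 0 := by
  simp [Pi.le_def, Fin.forall_fin_succ, tripod]

lemma tripod_apply_le {n p q s B : ℕ} (hp : p ≤ B) (hq : q ≤ B) (hs : s ≤ B) (j : Fin (n + 3)) :
    tripod n p q s j ≤ B := by
  revert j
  simp [Fin.forall_fin_succ, tripod, hp, hq, hs]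

lemma card_divisorsOfDegree_tripod (n p q s d i : ℕ) (hp : d ≤ p) (hq : d ≤ q) (hs : d ≤ s)
    (hi : i + d = p + q + s) :
    2 * (divisorsOfDegree (tripod n p q s) i).card = (d + 1) * (d + 2) := by
  have hcard : (divisorsOfDegree (tripod n p q s) i).card =
      ((range (d + 1)).sigma fun u => range (u + 1)).card := by
    refine card_nbij' (fun b => ⟨p - b 0 + (q - b 1), p - b 0⟩)
      (fun x => tripod n (p - x.2) (q - (x.1 - x.2)) (s - (d - x.1))) ?_ ?_ ?_ ?_
    · intro b hb
      obtain ⟨hb, hsum⟩ := mem_divisorsOfDegree.1 hb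
      obtain ⟨h0, h1, h2, h⟩ := le_tripod_iff.1 hb
      simp only [sum_fin_add_three, h, sum_const_zero] at hsum
      simp only [coe_sigma, Set.mem_sigma_iff, mem_coe, mem_range]
      omega
    · rintro ⟨w, u⟩ hx
      simp only [coe_sigma, Set.mem_sigma_iff, mem_coe, mem_range] at hx
      refine mem_divisorsOfDegree.2 ⟨le_tripod_iff.2 ?_, ?_⟩
      · exact ⟨Nat.sub_le _ _, Nat.sub_le _ _, Nat.sub_le _ _, fun j => rfl⟩
      · rw [sum_tripod]
        dsimp only
        omega
    · intro b hb
      obtain ⟨hb, hsum⟩ := mem_divisorsOfDegree.1 hb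
      obtain ⟨h0, h1, h2, h⟩ := le_tripod_iff.1 hb
      simp only [sum_fin_add_three, h, sum_const_zero] at hsum
      funext j
      revert j
      simp only [Fin.forall_fin_succ, tripod, Fin.cons_zero, Fin.cons_succ, h, Pi.zero_apply,
        implies_true, and_true, Fin.succ_zero_eq_one, Fin.succ_one_eq_two]
      omega
    · rintro ⟨w, u⟩ hx
      simp only [coe_sigma, Set.mem_sigma_iff, mem_coe, mem_range] at hx
      have e0 : ∀ x y z, tripod n x y z 0 = x := fun _ _ _ => rfl
      have e1 : ∀ x y z, tripod n x y z 1 = y := fun _ _ _ => rfl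
      simp only [e0, e1, Sigma.mk.injEq, heq_eq_eq]
      omega
  rw [hcard, card_sigma]
  simp only [card_range]
  have := sum_range_id_mul_two (d + 2)
  rw [sum_range_succ'] at this
  simp only [add_zero, Nat.add_one_sub_one] at this
  rw [mul_comm, this]
  ring

lemma disjoint_divisorsOfDegree {r : ℕ} {a a' : Fin r → ℕ} {i : ℕ} (k : Fin r)
    (h : a' k + ∑ j, a j < a k + i) :
    Disjoint (divisorsOfDegree a i) (divisorsOfDegree a' i) := by
  rw [disjoint_left]
  intro b hb hb'
  obtain ⟨hb, hsum⟩ := mem_divisorsOfDegree.1 hb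
  have hk : b k ≤ a' k := (mem_divisorsOfDegree.1 hb').1 k
  rw [← add_sum_erase univ a (mem_univ k)] at h
  rw [← add_sum_erase univ b (mem_univ k)] at hsum
  have := sum_le_sum fun j (_ : j ∈ univ.erase k) => hb j
  omega

/-- One monomial `tripod` together with monomials `spike`, one for each variable in `K`:
in degrees slightly below `e` the former contributes triangular numbers, the latter constants. -/
lemma exists_not_logConcave (n J : ℕ) (K : Finset (Fin (n + 3))) (A : Fin (n + 3) → ℕ)
    (hA : ∀ k, (n + 2) * A k + 1 ≤ J) (hK : ∃ k ∈ K, 1 ≤ A k)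
    (hJ : (J + 1) * (J + 2) < 2 * ∑ k ∈ K, (A k + 1) ^ (n + 2)) (e : ℕ) (he : 12 * J + 12 ≤ e) :
    ∃ M : Finset (Fin (n + 3) → ℕ),
      M.card = K.card + 1 ∧
      (∀ a ∈ M, ∑ j, a j = e) ∧
      (∀ j : Fin (n + 3), ∃ a ∈ M, 1 ≤ a j) ∧
      ∃ i, 1 ≤ i ∧
        ({b : Fin (n + 3) → ℕ | (∑ j, b j = i) ∧ ∃ a ∈ M, ∀ j, b j ≤ a j}.ncard) ^ 2 <
          {b : Fin (n + 3) → ℕ | (∑ j, b j = i - 1) ∧ ∃ a ∈ M, ∀ j, b j ≤ a j}.ncard *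
            {b : Fin (n + 3) → ℕ | (∑ j, b j = i + 1) ∧ ∃ a ∈ M, ∀ j, b j ≤ a j}.ncard := by
  classical
  obtain ⟨p, hp⟩ : ∃ p, p = e / 3 := ⟨_, rfl⟩
  obtain ⟨s, hs⟩ : ∃ s, s = e - 2 * p := ⟨_, rfl⟩
  set f := tripod n p p s with hf
  set g : Fin (n + 3) → Fin (n + 3) → ℕ := fun k => spike k (e - (n + 2) * A k) (A k) with hg
  have hfsum : ∑ j, f j = e := by
    rw [hf, sum_tripod]
    omega
  have hfle : ∀ j, f j ≤ p + 2 := tripod_apply_le (by omega) (by omega) (by omega)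
  have hgsum : ∀ k, ∑ j, g k j = e := fun k => by
    have := hA k
    simp only [hg]
    rw [sum_spike]
    omega
  have hgk : ∀ k, e + 1 ≤ g k k + J := fun k => by
    have := hA k
    simp only [hg, spike, Function.update_self]
    omega
  have hgle : ∀ k k', k ≠ k' → g k k' ≤ J := fun k k' hkk => by
    have h1 := hA k
    have h2 := Nat.le_mul_of_pos_left (A k) (show 0 < n + 2 by omega)
    simp only [hg, spike, Function.update_of_ne hkk.symm]
    omega
  have hginj : Function.Injective g := fun k k' h => by
    by_contra hkk
    have h1 := hgle k k' hkk
    have h2 := hgk k'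
    rw [h] at h1
    omega
  have hfg : f ∉ K.image g := by
    intro h
    obtain ⟨k, -, hk⟩ := mem_image.1 h
    have h1 := hfle k
    have h2 := hgk k
    rw [hk] at h2
    omega
  have hcount : ∀ d i, i + d = e → J ≤ d + 1 → d ≤ J + 1 →
      2 * {b : Fin (n + 3) → ℕ | (∑ j, b j = i) ∧
        ∃ a ∈ insert f (K.image g), ∀ j, b j ≤ a j}.ncard =
      (d + 1) * (d + 2) + 2 * ∑ k ∈ K, (A k + 1) ^ (n + 2) := by
    intro d i hid hd hd'
    have hdisj : ∀ k a, a k ≤ p + 2 →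
        Disjoint (divisorsOfDegree (g k) i) (divisorsOfDegree a i) := by
      intro k a ha
      have h1 := hgk k
      have h2 := hgsum k
      exact disjoint_divisorsOfDegree k (by omega)
    rw [ncard_eq_sum_card_divisorsOfDegree, sum_insert hfg, sum_image hginj.injOn, mul_add,
      card_divisorsOfDegree_tripod n p p s d i (by omega) (by omega) (by omega) (by omega)]
    · congr 2
      refine sum_congr rfl fun k _ => card_divisorsOfDegree_spike k _ _ i ?_ ?_ <;>
      · have := hA k
        omega
    · rw [coe_insert, Set.pairwiseDisjoint_insert_of_notMem (by simpa using hfg)]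
      refine ⟨?_, ?_⟩
      · intro a ha b hb hab
        obtain ⟨k, -, rfl⟩ := mem_image.1 (mem_coe.1 ha)
        obtain ⟨k', -, rfl⟩ := mem_image.1 (mem_coe.1 hb)
        have := hgle k' k fun h => hab (by rw [h])
        exact hdisj k _ (by omega)
      · intro b hb
        obtain ⟨k, -, rfl⟩ := mem_image.1 (mem_coe.1 hb)
        exact (hdisj k f (hfle k)).symm
  refine ⟨insert f (K.image g), ?_, ?_, ?_, e - J, by omega, ?_⟩
  · rw [card_insert_of_notMem hfg, card_image_of_injective _ hginj]
  · intro a ha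
    obtain rfl | ha := mem_insert.1 ha
    · exact hfsum
    · obtain ⟨k, -, rfl⟩ := mem_image.1 ha
      exact hgsum k
  · intro j
    obtain ⟨k, hk, hAk⟩ := hK
    refine ⟨g k, mem_insert_of_mem (mem_image_of_mem g hk), ?_⟩
    by_cases hjk : j = k
    · subst hjk
      have := hgk j
      omega
    · simpa [hg, spike, hjk] using hAk
  · obtain ⟨J, rfl⟩ : ∃ J', J = J' + 1 := ⟨J - 1, by have := hA 0; omega⟩
    have h0 := hcount J (e - (J + 1) + 1) (by omega) (by omega) (by omega)
    have h1 := hcount (J + 1) (e - (J + 1)) (by omega) (by omega) (by omega)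
    have h2 := hcount (J + 2) (e - (J + 1) - 1) (by omega) (by omega) (by omega)
    revert h0 h1 h2
    generalize Set.ncard _ = x
    generalize Set.ncard _ = y
    generalize Set.ncard _ = z
    intro h0 h1 h2
    have : (2 * y) ^ 2 < (2 * z) * (2 * x) := by
      rw [h0, h1, h2]
      nlinarith
    nlinarith

lemma socle_bound (n : ℕ) :
    ((n + 3) * 4 + 1 + 1) * ((n + 3) * 4 + 1 + 2) < 2 * 5 ^ (n + 3) := by
  induction n with
  | zero => norm_num
  | succ n ih =>
    rw [show n + 1 + 3 = (n + 3) + 1 by ring, pow_succ]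
    nlinarith

/-- **Theorem (existence of non-log-concave pure `O`-sequences).**
For every pair `(r, t)` with either `r = 3` and `t = 4`, or `r ≥ 4` and
`2 ≤ t ≤ r + 1`, and for all sufficiently large socle degrees `e`, there is a
set `M` of `t` distinct degree-`e` monomials in `r` variables, with every
variable dividing some element of `M` (so the pure `O`-sequence generated by
`M` has codimension `r`, type `t`, and socle degree `e`), whose pure
`O`-sequence `h i = #{monomials of degree i dividing some element of M}` is
not log-concave. -/
theorem stmt_16 (r t : ℕ)
    (hrt : (r = 3 ∧ t = 4) ∨ (4 ≤ r ∧ 2 ≤ t ∧ t ≤ r + 1)) :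
    ∃ N : ℕ, ∀ e, N ≤ e →
      ∃ M : Finset (Fin r → ℕ),
        M.card = t ∧
        (∀ a ∈ M, ∑ j, a j = e) ∧
        (∀ j : Fin r, ∃ a ∈ M, 1 ≤ a j) ∧
        ∃ i, 1 ≤ i ∧
          ({b : Fin r → ℕ | (∑ j, b j = i) ∧ ∃ a ∈ M, ∀ j, b j ≤ a j}.ncard) ^ 2 <
            {b : Fin r → ℕ | (∑ j, b j = i - 1) ∧ ∃ a ∈ M, ∀ j, b j ≤ a j}.ncard *
              {b : Fin r → ℕ | (∑ j, b j = i + 1) ∧ ∃ a ∈ M, ∀ j, b j ≤ a j}.ncard := by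
  classical
  obtain ⟨rfl, rfl⟩ | ⟨hr, ht, htr⟩ := hrt
  · refine ⟨12 * 3 + 12, fun e he => ?_⟩
    simpa using exists_not_logConcave 0 3 univ (fun _ => 1) (by simp) ⟨0, by simp⟩ (by simp) e he
  · obtain ⟨n, rfl⟩ : ∃ n, r = n + 1 + 3 := ⟨r - 4, by omega⟩
    obtain ⟨K, hK, hcard⟩ := exists_superset_card_eq (s := {(0 : Fin (n + 1 + 3))}) (n := t - 1)
      (by simp; omega) (by simp; omega)
    have hK0 : 0 ∈ K := hK (mem_singleton_self 0)
    refine ⟨12 * ((n + 3) * 4 + 1) + 12, fun e he => ?_⟩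
    have h := exists_not_logConcave (n + 1) ((n + 3) * 4 + 1) K (Pi.single 0 4) ?_ ⟨0, hK0, by simp⟩
      ?_ e he
    · rwa [hcard, show t - 1 + 1 = t by omega] at h
    · intro k
      by_cases hk : k = 0
      · subst hk
        simp only [Pi.single_eq_same]
        omega
      · simp [hk]
    · refine (socle_bound n).trans_le (Nat.mul_le_mul_left 2 ?_)
      simpa using single_le_sum
        (f := fun k => ((Pi.single 0 4 : Fin (n + 1 + 3) → ℕ) k + 1) ^ (n + 1 + 2))
        (fun _ _ => Nat.zero_le _) hK0
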